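/- arXiv:1711.01975 — 2 statements merged into one kernel-verified Lean document; each statement's English description precedes it below -/
import Mathlib

section
/- Let k ≥ 2 and let x_1,...,x_k, a_1,...,a_k be 2k distinct vertices, writing x = {x_1,...,x_k}. For each nonempty I ⊆ [k] of even size, let b^I_1,...,b^I_k be vertices such that the k vertices of the edge e_I of C_{x,a} together with b^I_1,...,b^I_k are 2k distinct vertices, so that the cross-polytope C_{e_I, b^I} is defined (pairing the i-th vertex of e_I with b^I_i), and suppose that all the vertices x_1,...,x_k, a_1,...,a_k and b^I_j (over all such I and all j) are pairwise distinct. Let A = C^{odd}_{x,a} ∪ ∪_I (C_{e_I,b^I} \ {e_I}), the union over nonempty even-sized I ⊆ [k]. Then: (1) A^{alg} := ∪_I C^{odd}_{e_I,b^I} is a K_k-decomposition of K_{k−1}(A) \ K_{k−1}(x), and (2) A^{non-alg} := C^{odd}_{x,a} ∪ ∪_I (C^{even}_{e_I,b^I} \ {e_I}) is a K_k-decomposition of K_{k−1}(A). -/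
open Finset

/-- A set `S` of `k`-subsets, each having all its `(k-1)`-subsets in `G`,
such that every facet of `G` lies in exactly one edge of `S`. -/
def IsKDecompositionOf {V : Type*} [DecidableEq V] (k : ℕ) (G S : Finset (Finset V)) : Prop :=
  (∀ e ∈ S, e.card = k ∧ ∀ f ⊆ e, f.card = k - 1 → f ∈ G) ∧
  (∀ f ∈ G, ∃! e, e ∈ S ∧ f ⊆ e)

/-- The set of all `(k-1)`-subsets of edges of `H`. -/
def facetsOf {V : Type*} [DecidableEq V] (k : ℕ) (H : Finset (Finset V)) :
    Finset (Finset V) :=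
  H.biUnion fun e => e.powersetCard (k - 1)

/-- The `i`-th vertex of the edge `e_I` of the cross-polytope `C_{x,a}`. -/
def cpVert {V : Type*} {k : ℕ} (x a : Fin k → V) (I : Finset (Fin k)) (i : Fin k) : V :=
  if i ∈ I then a i else x i

/-- The edge `e_I` of the cross-polytope `C_{x,a}`. -/
def cpEdge {V : Type*} [DecidableEq V] {k : ℕ} (x a : Fin k → V) (I : Finset (Fin k)) :
    Finset V :=
  Finset.univ.image (cpVert x a I)

/-- The odd edges of the cross-polytope `C_{x,a}`. -/
def cpOdd {V : Type*} [DecidableEq V] {k : ℕ} (x a : Fin k → V) : Finset (Finset V) :=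
  (Finset.univ.filter fun I : Finset (Fin k) => Odd I.card).image (cpEdge x a)

/-- The even edges of the cross-polytope `C_{x,a}`. -/
def cpEven {V : Type*} [DecidableEq V] {k : ℕ} (x a : Fin k → V) : Finset (Finset V) :=
  (Finset.univ.filter fun I : Finset (Fin k) => Even I.card).image (cpEdge x a)

/-- The nonempty even-sized subsets of `[k]`. -/
def evenIdx (k : ℕ) : Finset (Finset (Fin k)) :=
  Finset.univ.filter fun I : Finset (Fin k) => I.Nonempty ∧ Even I.card

/-! Two edges `e_I`, `e_J` of a cross-polytope meet in `k - |I ∆ J|` vertices, so distinct edges of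
equal parity share no facet; and exchanging the one vertex missing from a facet flips the parity, so
odd and even edges have the same facets. For `C_{e_I, b^I}` this splits the facets of the odd edges
into those of the base `e_I` and those of the other even edges. Over all nonempty even `I` the
former are the facets of `C_{x,a}` outside `x`: adding the facets of `x` to those of `A^{alg}`
gives `K_{k-1}(A)`, and so does trading the facets of the bases `e_I` for those of
`C^{odd}_{x,a}`, which is `A^{non-alg}`. Facets of different `C_{e_I, b^I}` do not collide: a
common facet would avoid all apices `b^I_j`, hence be a facet of two distinct even edges of
`C_{x,a}`. -/

open scoped symmDiff

section Packing

variable {V : Type*} {k : ℕ}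

/-- A `k`-uniform hypergraph no two of whose edges share a facet, so that it decomposes the set of
its own facets. -/
structure IsFacetPacking (k : ℕ) (S : Finset (Finset V)) : Prop where
  sized : (S : Set (Finset V)).Sized k
  pairwiseDisjoint : (S : Set (Finset V)).PairwiseDisjoint (powersetCard (k - 1))

variable [DecidableEq V]

theorem mem_facetsOf {H : Finset (Finset V)} {f : Finset V} :
    f ∈ facetsOf k H ↔ ∃ e ∈ H, f ⊆ e ∧ #f = k - 1 := by
  simp only [facetsOf, mem_biUnion, mem_powersetCard]

theorem powersetCard_subset_facetsOf {H : Finset (Finset V)} {e : Finset V} (he : e ∈ H) :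
    e.powersetCard (k - 1) ⊆ facetsOf k H :=
  subset_biUnion_of_mem (fun e : Finset V => e.powersetCard (k - 1)) he

theorem facetsOf_union (H H' : Finset (Finset V)) :
    facetsOf k (H ∪ H') = facetsOf k H ∪ facetsOf k H' :=
  union_biUnion

theorem facetsOf_biUnion {ι : Type*} (s : Finset ι) (H : ι → Finset (Finset V)) :
    facetsOf k (s.biUnion H) = s.biUnion fun i => facetsOf k (H i) :=
  biUnion_biUnion _ _ _

theorem IsFacetPacking.isKDecompositionOf {S : Finset (Finset V)} (hS : IsFacetPacking k S) :
    IsKDecompositionOf k (facetsOf k S) S := by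
  refine ⟨fun e he => ⟨hS.sized he, fun f hfe hf => mem_facetsOf.2 ⟨e, he, hfe, hf⟩⟩, ?_⟩
  intro f hf
  obtain ⟨e, he, hfe, hcard⟩ := mem_facetsOf.1 hf
  refine ⟨e, ⟨he, hfe⟩, fun e' ⟨he', hfe'⟩ => ?_⟩
  exact hS.pairwiseDisjoint.elim_finset he' he f (mem_powersetCard.2 ⟨hfe', hcard⟩)
    (mem_powersetCard.2 ⟨hfe, hcard⟩)

theorem IsFacetPacking.union {S T : Finset (Finset V)} (hS : IsFacetPacking k S)
    (hT : IsFacetPacking k T) (hST : Disjoint (facetsOf k S) (facetsOf k T)) :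
    IsFacetPacking k (S ∪ T) where
  sized := by
    rw [coe_union]
    exact Set.sized_union.2 ⟨hS.sized, hT.sized⟩
  pairwiseDisjoint := by
    rw [coe_union]
    exact hS.pairwiseDisjoint.union hT.pairwiseDisjoint fun e he e' he' _ =>
      hST.mono (powersetCard_subset_facetsOf he) (powersetCard_subset_facetsOf he')

theorem IsFacetPacking.biUnion {ι : Type*} {s : Finset ι} {S : ι → Finset (Finset V)}
    (hS : ∀ i ∈ s, IsFacetPacking k (S i))
    (hdisj : (s : Set ι).PairwiseDisjoint fun i => facetsOf k (S i)) :
    IsFacetPacking k (s.biUnion S) where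
  sized := by
    rw [coe_biUnion]
    exact Set.sized_iUnion₂.2 fun i hi => (hS i hi).sized
  pairwiseDisjoint := by
    rw [coe_biUnion]
    simp only [facetsOf, ← sup_eq_biUnion] at hdisj
    exact hdisj.biUnion_finset fun i hi => (hS i hi).pairwiseDisjoint

end Packing

section Parity

variable {α : Type*} [DecidableEq α]

theorem card_symmDiff_add_two_mul_card_inter (s t : Finset α) :
    #(s ∆ t) + 2 * #(s ∩ t) = #s + #t := by
  have hunion : #(s ∆ t) = #(s \ t) + #(t \ s) := card_union_of_disjoint disjoint_sdiff_sdiff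
  have hs := card_sdiff_add_card_inter s t
  have ht := card_sdiff_add_card_inter t s
  rw [inter_comm] at ht
  lia

theorem even_card_symmDiff {s t : Finset α} : Even #(s ∆ t) ↔ (Even #s ↔ Even #t) := by
  rw [← Nat.even_add, ← card_symmDiff_add_two_mul_card_inter]
  simp [Nat.even_add]

end Parity

section CrossPolytope

variable {V : Type*} {k : ℕ} {x a : Fin k → V}

theorem cpVert_eq_iff (h : Function.Injective (Sum.elim x a)) {I J : Finset (Fin k)}
    {i j : Fin k} : cpVert x a I i = cpVert x a J j ↔ i = j ∧ i ∉ I ∆ J := by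
  obtain ⟨hx, ha, hxa⟩ := Sum.elim_injective.1 h
  unfold cpVert
  split_ifs <;> grind [mem_symmDiff, hx.eq_iff, ha.eq_iff]

theorem cpVert_injective (h : Function.Injective (Sum.elim x a)) (I : Finset (Fin k)) :
    Function.Injective (cpVert x a I) :=
  fun _ _ hij => ((cpVert_eq_iff h).1 hij).1

variable [DecidableEq V]

/-- The edges of the cross-polytope `C_{x,a}` other than its base `e_∅`. -/
def cpNonbase (x a : Fin k → V) : Finset (Finset V) :=
  (univ.filter fun I : Finset (Fin k) => I.Nonempty).image (cpEdge x a)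

/-- The even edges of the cross-polytope `C_{x,a}` other than its base `e_∅`. -/
def cpEvenNonbase (x a : Fin k → V) : Finset (Finset V) :=
  (evenIdx k).image (cpEdge x a)

theorem cpEdge_empty (x a : Fin k → V) : cpEdge x a ∅ = univ.image x := by
  simp [cpEdge, funext fun i => show cpVert x a ∅ i = x i from if_neg (notMem_empty i)]

theorem even_card_of_mem_evenIdx {I : Finset (Fin k)} (hI : I ∈ evenIdx k) : Even #I :=
  (mem_filter.1 hI).2.2

theorem ne_empty_of_mem_evenIdx {I : Finset (Fin k)} (hI : I ∈ evenIdx k) : I ≠ ∅ :=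
  (mem_filter.1 hI).2.1.ne_empty

theorem facetsOf_cpEvenNonbase_eq_biUnion (x a : Fin k → V) :
    facetsOf k (cpEvenNonbase x a) =
      (evenIdx k).biUnion fun I => (cpEdge x a I).powersetCard (k - 1) :=
  image_biUnion

theorem cpEven_eq_insert (x a : Fin k → V) :
    cpEven x a = insert (univ.image x) (cpEvenNonbase x a) := by
  have hidx : (univ.filter fun I : Finset (Fin k) => Even #I) = insert ∅ (evenIdx k) := by
    ext I
    rcases I.eq_empty_or_nonempty with rfl | hI
    · simp
    · simp [evenIdx, hI, hI.ne_empty]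
  rw [cpEven, hidx, image_insert, cpEdge_empty, cpEvenNonbase]

theorem cpNonbase_eq_union (x a : Fin k → V) :
    cpNonbase x a = cpOdd x a ∪ cpEvenNonbase x a := by
  have hidx : (univ.filter fun I : Finset (Fin k) => I.Nonempty) =
      (univ.filter fun I : Finset (Fin k) => Odd #I) ∪ evenIdx k := by
    ext I
    rcases I.eq_empty_or_nonempty with rfl | hI
    · simp [evenIdx]
    · simp [evenIdx, hI, (Nat.even_or_odd #I).symm]
  rw [cpNonbase, hidx, image_union, cpOdd, cpEvenNonbase]

theorem exists_subset_cpEdge_symmDiff_singleton {I : Finset (Fin k)} {f : Finset V}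
    (hf : f ⊆ cpEdge x a I) (hcard : #f < k) : ∃ i, f ⊆ cpEdge x a (I ∆ {i}) := by
  obtain ⟨s, -, hinj, rfl⟩ :=
    exists_subset_injOn_image_eq_of_surjOn _ f (surjOn_iff_subset_image.2 hf)
  rw [card_image_of_injOn hinj] at hcard
  obtain ⟨i, hi⟩ : ∃ i, i ∉ s := by
    by_contra! hs
    simp [eq_univ_of_forall hs] at hcard
  refine ⟨i, image_subset_iff.2 fun j hj => mem_image.2 ⟨j, mem_univ j, ?_⟩⟩
  have hji : j ≠ i := ne_of_mem_of_not_mem hj hi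
  simp [cpVert, mem_symmDiff, hji]

theorem facetsOf_image_cpEdge_subset (hk : 0 < k) {s t : Finset (Finset (Fin k))}
    (hst : ∀ I ∈ s, ∀ i, I ∆ {i} ∈ t) :
    facetsOf k (s.image (cpEdge x a)) ⊆ facetsOf k (t.image (cpEdge x a)) := by
  intro f hf
  obtain ⟨_, he, hfe, hcard⟩ := mem_facetsOf.1 hf
  obtain ⟨I, hI, rfl⟩ := mem_image.1 he
  obtain ⟨i, hfi⟩ := exists_subset_cpEdge_symmDiff_singleton hfe (by lia)
  exact mem_facetsOf.2 ⟨_, mem_image_of_mem _ (hst I hI i), hfi, hcard⟩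

theorem facetsOf_cpOdd_eq_facetsOf_cpEven (hk : 0 < k) (x a : Fin k → V) :
    facetsOf k (cpOdd x a) = facetsOf k (cpEven x a) := by
  refine (facetsOf_image_cpEdge_subset hk fun I hI i => ?_).antisymm
    (facetsOf_image_cpEdge_subset hk fun I hI i => ?_)
  · rw [mem_filter_univ] at hI ⊢
    simpa [even_card_symmDiff] using hI
  · rw [mem_filter_univ] at hI ⊢
    simpa [← Nat.not_even_iff_odd, even_card_symmDiff] using hI

theorem facetsOf_cpOdd (hk : 0 < k) (x a : Fin k → V) :
    facetsOf k (cpOdd x a) =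
      (univ.image x).powersetCard (k - 1) ∪ facetsOf k (cpEvenNonbase x a) := by
  rw [facetsOf_cpOdd_eq_facetsOf_cpEven hk, cpEven_eq_insert, facetsOf, biUnion_insert, facetsOf]

theorem facetsOf_cpEvenNonbase_subset (hk : 0 < k) (x a : Fin k → V) :
    facetsOf k (cpEvenNonbase x a) ⊆ facetsOf k (cpOdd x a) := by
  rw [facetsOf_cpOdd hk]
  exact subset_union_right

theorem facetsOf_cpNonbase (hk : 0 < k) (x a : Fin k → V) :
    facetsOf k (cpNonbase x a) = facetsOf k (cpOdd x a) := by
  rw [cpNonbase_eq_union, facetsOf_union, union_eq_left.2 (facetsOf_cpEvenNonbase_subset hk x a)]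

theorem card_cpEdge_inter_add_card_symmDiff (h : Function.Injective (Sum.elim x a))
    (I J : Finset (Fin k)) : #(cpEdge x a I ∩ cpEdge x a J) + #(I ∆ J) = k := by
  have hinter : cpEdge x a I ∩ cpEdge x a J = (I ∆ J)ᶜ.image (cpVert x a I) := by
    ext v
    simp only [cpEdge, mem_inter, mem_image, mem_univ, true_and, mem_compl]
    constructor
    · rintro ⟨⟨i, rfl⟩, j, hj⟩
      exact ⟨i, ((cpVert_eq_iff h).1 hj.symm).2, rfl⟩
    · rintro ⟨i, hi, rfl⟩
      exact ⟨⟨i, rfl⟩, i, ((cpVert_eq_iff h).2 ⟨rfl, hi⟩).symm⟩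
  rw [hinter, card_image_of_injective _ (cpVert_injective h I), card_compl_add_card,
    Fintype.card_fin]

theorem disjoint_powersetCard_cpEdge (h : Function.Injective (Sum.elim x a))
    {I J : Finset (Fin k)} (hparity : Even #I ↔ Even #J) (hne : I ≠ J) :
    Disjoint ((cpEdge x a I).powersetCard (k - 1)) ((cpEdge x a J).powersetCard (k - 1)) := by
  refine disjoint_left.2 fun f hfI hfJ => hne ?_
  rw [mem_powersetCard] at hfI hfJ
  have hle : #f ≤ #(cpEdge x a I ∩ cpEdge x a J) := card_le_card (subset_inter hfI.1 hfJ.1)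
  have hsum : #(cpEdge x a I ∩ cpEdge x a J) + #(I ∆ J) = k :=
    card_cpEdge_inter_add_card_symmDiff h I J
  have heven : Even #(I ∆ J) := even_card_symmDiff.2 hparity
  have hzero : #(I ∆ J) = 0 := by grind
  exact symmDiff_eq_bot.1 (card_eq_zero.1 hzero)

theorem isFacetPacking_image_cpEdge (h : Function.Injective (Sum.elim x a))
    {s : Finset (Finset (Fin k))} (hs : ∀ I ∈ s, ∀ J ∈ s, (Even #I ↔ Even #J)) :
    IsFacetPacking k (s.image (cpEdge x a)) where
  sized := by
    rw [coe_image]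
    rintro _ ⟨I, -, rfl⟩
    simpa using card_cpEdge_inter_add_card_symmDiff h I I
  pairwiseDisjoint := by
    rw [coe_image]
    rintro _ ⟨I, hI, rfl⟩ _ ⟨J, hJ, rfl⟩ hne
    exact disjoint_powersetCard_cpEdge h (hs I hI J hJ) (ne_of_apply_ne _ hne)

theorem isFacetPacking_cpOdd (h : Function.Injective (Sum.elim x a)) :
    IsFacetPacking k (cpOdd x a) :=
  isFacetPacking_image_cpEdge h fun I hI J hJ => by
    rw [mem_filter_univ, ← Nat.not_even_iff_odd] at hI hJ
    exact iff_of_false hI hJ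

theorem isFacetPacking_cpEvenNonbase (h : Function.Injective (Sum.elim x a)) :
    IsFacetPacking k (cpEvenNonbase x a) :=
  isFacetPacking_image_cpEdge h fun _ hI _ hJ =>
    iff_of_true (even_card_of_mem_evenIdx hI) (even_card_of_mem_evenIdx hJ)

theorem disjoint_powersetCard_image_facetsOf_cpEvenNonbase
    (h : Function.Injective (Sum.elim x a)) :
    Disjoint ((univ.image x).powersetCard (k - 1)) (facetsOf k (cpEvenNonbase x a)) := by
  rw [← cpEdge_empty x a, facetsOf_cpEvenNonbase_eq_biUnion, disjoint_biUnion_right]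
  exact fun I hI => disjoint_powersetCard_cpEdge h (by simp [even_card_of_mem_evenIdx hI])
    (ne_empty_of_mem_evenIdx hI).symm

theorem subset_image_of_subset_cpEdge {f : Finset V} {I : Finset (Fin k)}
    (hf : f ⊆ cpEdge x a I) (ha : ∀ i, a i ∉ f) : f ⊆ univ.image x := by
  intro v hv
  obtain ⟨i, -, rfl⟩ := mem_image.1 (hf hv)
  rw [cpVert] at hv ⊢
  split_ifs at hv ⊢
  · exact absurd hv (ha i)
  · exact mem_image_of_mem x (mem_univ i)

theorem mem_powersetCard_image_of_mem_facetsOf_cpOdd {f : Finset V}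
    (hf : f ∈ facetsOf k (cpOdd x a)) (ha : ∀ i, a i ∉ f) :
    f ∈ (univ.image x).powersetCard (k - 1) := by
  obtain ⟨_, he, hfe, hcard⟩ := mem_facetsOf.1 hf
  obtain ⟨I, -, rfl⟩ := mem_image.1 he
  exact mem_powersetCard.2 ⟨subset_image_of_subset_cpEdge hfe ha, hcard⟩

end CrossPolytope

section Absorber

variable {V : Type*} {k : ℕ} {x a : Fin k → V} {b : Finset (Fin k) → Fin k → V}
  {I I' J : Finset (Fin k)}

/-- All the vertices of the absorber are distinct: those of `C_{x,a}`, and the apices `b^I_j` for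
nonempty even-sized `I`. -/
def AbsorberVertsDistinct (x a : Fin k → V) (b : Finset (Fin k) → Fin k → V) : Prop :=
  Function.Injective (Sum.elim x (Sum.elim a
    (fun p : {I : Finset (Fin k) // I ∈ evenIdx k} × Fin k => b p.1.1 p.2)))

namespace AbsorberVertsDistinct

theorem injective_base (h : AbsorberVertsDistinct x a b) :
    Function.Injective (Sum.elim x a) := by
  obtain ⟨hx, hab, hxab⟩ := Sum.elim_injective.1 h
  exact hx.sumElim (Sum.elim_injective.1 hab).1 fun i j => hxab i (.inl j)

theorem cpVert_ne_apex (h : AbsorberVertsDistinct x a b) (hI : I ∈ evenIdx k) (i j : Fin k) :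
    cpVert x a J i ≠ b I j := by
  obtain ⟨-, hab, hxab⟩ := Sum.elim_injective.1 h
  rw [cpVert]
  split_ifs
  · exact (Sum.elim_injective.1 hab).2.2 i (⟨I, hI⟩, j)
  · exact hxab i (.inr (⟨I, hI⟩, j))

theorem apex_eq_iff (h : AbsorberVertsDistinct x a b) (hI : I ∈ evenIdx k) (hI' : I' ∈ evenIdx k)
    {i j : Fin k} : b I i = b I' j ↔ I = I' ∧ i = j := by
  simpa using h.eq_iff (a := .inr (.inr (⟨I, hI⟩, i))) (b := .inr (.inr (⟨I', hI'⟩, j)))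

theorem injective_apex (h : AbsorberVertsDistinct x a b) (hI : I ∈ evenIdx k) :
    Function.Injective (Sum.elim (cpVert x a I) (b I)) :=
  (cpVert_injective h.injective_base I).sumElim (fun _ _ hij => ((h.apex_eq_iff hI hI).1 hij).2)
    (h.cpVert_ne_apex hI)

variable [DecidableEq V]

theorem apex_notMem_cpEdge (h : AbsorberVertsDistinct x a b) (hI : I ∈ evenIdx k) (i : Fin k) :
    b I i ∉ cpEdge x a J := fun hmem => by
  obtain ⟨j, -, hj⟩ := mem_image.1 hmem
  exact h.cpVert_ne_apex hI j i hj

theorem apex_notMem_cpEdge_of_ne (h : AbsorberVertsDistinct x a b) (hI : I ∈ evenIdx k)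
    (hI' : I' ∈ evenIdx k) (hne : I ≠ I') (i : Fin k) :
    b I i ∉ cpEdge (cpVert x a I') (b I') J := fun hmem => by
  obtain ⟨j, -, hj⟩ := mem_image.1 hmem
  rw [cpVert] at hj
  split_ifs at hj
  · exact hne ((h.apex_eq_iff hI' hI).1 hj).1.symm
  · exact h.cpVert_ne_apex hI j i hj

theorem mem_powersetCard_cpEdge (h : AbsorberVertsDistinct x a b) (hI : I ∈ evenIdx k)
    {f : Finset V} (hf : f ∈ facetsOf k (cpOdd (cpVert x a I) (b I))) (hfJ : f ⊆ cpEdge x a J) :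
    f ∈ (cpEdge x a I).powersetCard (k - 1) :=
  mem_powersetCard_image_of_mem_facetsOf_cpOdd hf fun i hi => h.apex_notMem_cpEdge hI i (hfJ hi)

theorem disjoint_powersetCard_cpEdge_facetsOf_cpOdd (h : AbsorberVertsDistinct x a b)
    (hI : I ∈ evenIdx k) (hJ : Even #J) (hne : J ≠ I) :
    Disjoint ((cpEdge x a J).powersetCard (k - 1))
      (facetsOf k (cpOdd (cpVert x a I) (b I))) := by
  refine disjoint_left.2 fun f hfJ hf => ?_
  have hfI := h.mem_powersetCard_cpEdge hI hf (mem_powersetCard.1 hfJ).1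
  have hparity : Even #J ↔ Even #I := iff_of_true hJ (even_card_of_mem_evenIdx hI)
  exact disjoint_left.1 (disjoint_powersetCard_cpEdge h.injective_base hparity hne) hfJ hfI

theorem pairwiseDisjoint_facetsOf_cpOdd (h : AbsorberVertsDistinct x a b) :
    (evenIdx k : Set (Finset (Fin k))).PairwiseDisjoint
      fun I => facetsOf k (cpOdd (cpVert x a I) (b I)) := by
  intro I hI I' hI' hne
  refine disjoint_left.2 fun f hf hf' => ?_
  obtain ⟨_, he, hfe, -⟩ := mem_facetsOf.1 hf'
  obtain ⟨J, -, rfl⟩ := mem_image.1 he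
  have hfI : f ∈ (cpEdge x a I).powersetCard (k - 1) :=
    mem_powersetCard_image_of_mem_facetsOf_cpOdd hf fun i hi =>
      h.apex_notMem_cpEdge_of_ne hI hI' hne i (hfe hi)
  exact disjoint_left.1 (h.disjoint_powersetCard_cpEdge_facetsOf_cpOdd hI'
    (even_card_of_mem_evenIdx hI) hne) hfI hf'

theorem disjoint_facetsOf_cpOdd_facetsOf_cpEvenNonbase (h : AbsorberVertsDistinct x a b)
    (hk : 0 < k) (hI : I ∈ evenIdx k) :
    Disjoint (facetsOf k (cpOdd x a)) (facetsOf k (cpEvenNonbase (cpVert x a I) (b I))) := by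
  refine disjoint_left.2 fun f hf hfE => ?_
  obtain ⟨_, he, hfe, -⟩ := mem_facetsOf.1 hf
  obtain ⟨J, -, rfl⟩ := mem_image.1 he
  have hfI : f ∈ (cpEdge x a I).powersetCard (k - 1) :=
    h.mem_powersetCard_cpEdge hI (facetsOf_cpEvenNonbase_subset hk _ _ hfE) hfe
  exact disjoint_left.1
    (disjoint_powersetCard_image_facetsOf_cpEvenNonbase (h.injective_apex hI)) hfI hfE

end AbsorberVertsDistinct

variable [DecidableEq V]

/-- The absorber `A`: the odd edges of `C_{x,a}`, together with the edges of every `C_{e_I, b^I}`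
other than its base `e_I`. -/
def absorber (x a : Fin k → V) (b : Finset (Fin k) → Fin k → V) : Finset (Finset V) :=
  cpOdd x a ∪ (evenIdx k).biUnion fun I => cpNonbase (cpVert x a I) (b I)

/-- The algebraic decomposition `A^{alg}` of the facets of `absorber` outside `x`: the odd edges of
every `C_{e_I, b^I}`. -/
def absorberAlg (x a : Fin k → V) (b : Finset (Fin k) → Fin k → V) : Finset (Finset V) :=
  (evenIdx k).biUnion fun I => cpOdd (cpVert x a I) (b I)

/-- The non-algebraic decomposition `A^{non-alg}` of the facets of `absorber`: the odd edges of
`C_{x,a}` and the even edges of every `C_{e_I, b^I}` other than its base `e_I`. -/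
def absorberNonAlg (x a : Fin k → V) (b : Finset (Fin k) → Fin k → V) : Finset (Finset V) :=
  cpOdd x a ∪ (evenIdx k).biUnion fun I => cpEvenNonbase (cpVert x a I) (b I)

theorem facetsOf_absorberAlg (hk : 0 < k) (x a : Fin k → V) (b : Finset (Fin k) → Fin k → V) :
    facetsOf k (absorberAlg x a b) = facetsOf k (cpEvenNonbase x a) ∪
      (evenIdx k).biUnion fun I => facetsOf k (cpEvenNonbase (cpVert x a I) (b I)) := by
  simp only [absorberAlg, facetsOf_biUnion, facetsOf_cpOdd hk, facetsOf_cpEvenNonbase_eq_biUnion x]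
  exact biUnion_union

theorem facetsOf_absorber (hk : 0 < k) (x a : Fin k → V) (b : Finset (Fin k) → Fin k → V) :
    facetsOf k (absorber x a b) = facetsOf k (cpOdd x a) ∪ facetsOf k (absorberAlg x a b) := by
  simp only [absorber, absorberAlg, facetsOf_union, facetsOf_biUnion, facetsOf_cpNonbase hk]

theorem facetsOf_absorber_eq_facetsOf_absorberNonAlg (hk : 0 < k) (x a : Fin k → V)
    (b : Finset (Fin k) → Fin k → V) :
    facetsOf k (absorber x a b) = facetsOf k (absorberNonAlg x a b) := by
  rw [facetsOf_absorber hk, facetsOf_absorberAlg hk, ← union_assoc,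
    union_eq_left.2 (facetsOf_cpEvenNonbase_subset hk x a), absorberNonAlg, facetsOf_union,
    facetsOf_biUnion]

theorem facetsOf_absorber_eq_powersetCard_union (hk : 0 < k) (x a : Fin k → V)
    (b : Finset (Fin k) → Fin k → V) :
    facetsOf k (absorber x a b) =
      (univ.image x).powersetCard (k - 1) ∪ facetsOf k (absorberAlg x a b) := by
  rw [facetsOf_absorber hk, facetsOf_cpOdd hk, union_assoc, facetsOf_absorberAlg hk,
    ← union_assoc (facetsOf k (cpEvenNonbase x a)), union_self]

namespace AbsorberVertsDistinct

theorem isFacetPacking_absorberAlg (h : AbsorberVertsDistinct x a b) :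
    IsFacetPacking k (absorberAlg x a b) :=
  .biUnion (fun _ hI => isFacetPacking_cpOdd (h.injective_apex hI))
    h.pairwiseDisjoint_facetsOf_cpOdd

theorem isFacetPacking_absorberNonAlg (h : AbsorberVertsDistinct x a b) (hk : 0 < k) :
    IsFacetPacking k (absorberNonAlg x a b) := by
  refine (isFacetPacking_cpOdd h.injective_base).union (.biUnion
    (fun I hI => isFacetPacking_cpEvenNonbase (h.injective_apex hI)) ?_) ?_
  · exact h.pairwiseDisjoint_facetsOf_cpOdd.mono fun I => facetsOf_cpEvenNonbase_subset hk _ _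
  · rw [facetsOf_biUnion, disjoint_biUnion_right]
    exact fun I hI => h.disjoint_facetsOf_cpOdd_facetsOf_cpEvenNonbase hk hI

theorem disjoint_powersetCard_image_facetsOf_absorberAlg (h : AbsorberVertsDistinct x a b) :
    Disjoint ((univ.image x).powersetCard (k - 1)) (facetsOf k (absorberAlg x a b)) := by
  rw [absorberAlg, facetsOf_biUnion, disjoint_biUnion_right, ← cpEdge_empty x a]
  exact fun I hI => h.disjoint_powersetCard_cpEdge_facetsOf_cpOdd hI (by simp)
    (ne_empty_of_mem_evenIdx hI).symm

theorem facetsOf_absorber_sdiff (h : AbsorberVertsDistinct x a b) (hk : 0 < k) :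
    facetsOf k (absorber x a b) \ (univ.image x).powersetCard (k - 1) =
      facetsOf k (absorberAlg x a b) := by
  rw [facetsOf_absorber_eq_powersetCard_union hk,
    union_sdiff_cancel_left h.disjoint_powersetCard_image_facetsOf_absorberAlg]

end AbsorberVertsDistinct

end Absorber

/-- the absorber `A` built from the cross-polytope `C_{x,a}`
together with associated cross-polytopes `C_{e_I, b^I}` on the nonempty even
edges admits two decompositions: the algebraic one, `A^{alg} = ∪_I C^{odd}_{e_I,b^I}`,
decomposing `K_{k-1}(A) \ K_{k-1}(x)`, and the non-algebraic one,
`A^{non-alg} = C^{odd}_{x,a} ∪ ∪_I (C^{even}_{e_I,b^I} \ {e_I})`,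
decomposing `K_{k-1}(A)`. -/
theorem stmt_16 {V : Type*} [DecidableEq V] (k : ℕ) (hk : 2 ≤ k)
    (x a : Fin k → V) (b : Finset (Fin k) → Fin k → V)
    (hdistinct : Function.Injective
      (Sum.elim x (Sum.elim a
        (fun p : {I : Finset (Fin k) // I ∈ evenIdx k} × Fin k => b p.1.1 p.2)))) :
    IsKDecompositionOf k
      ((facetsOf k
          (cpOdd x a ∪ (evenIdx k).biUnion fun I =>
            ((Finset.univ.filter fun J : Finset (Fin k) => J.Nonempty).image
              fun J => cpEdge (cpVert x a I) (b I) J))) \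
        (Finset.univ.image x).powersetCard (k - 1))
      ((evenIdx k).biUnion fun I =>
        (Finset.univ.filter fun J : Finset (Fin k) => Odd J.card).image
          fun J => cpEdge (cpVert x a I) (b I) J) ∧
    IsKDecompositionOf k
      (facetsOf k
        (cpOdd x a ∪ (evenIdx k).biUnion fun I =>
          ((Finset.univ.filter fun J : Finset (Fin k) => J.Nonempty).image
            fun J => cpEdge (cpVert x a I) (b I) J)))
      (cpOdd x a ∪ (evenIdx k).biUnion fun I =>
        (Finset.univ.filter fun J : Finset (Fin k) => J.Nonempty ∧ Even J.card).image
          fun J => cpEdge (cpVert x a I) (b I) J) := by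
  have h : AbsorberVertsDistinct x a b := hdistinct
  have hpos : 0 < k := by lia
  have halg : IsKDecompositionOf k
      (facetsOf k (absorber x a b) \ (univ.image x).powersetCard (k - 1)) (absorberAlg x a b) := by
    rw [h.facetsOf_absorber_sdiff hpos]
    exact h.isFacetPacking_absorberAlg.isKDecompositionOf
  have hnonAlg : IsKDecompositionOf k (facetsOf k (absorber x a b)) (absorberNonAlg x a b) := by
    rw [facetsOf_absorber_eq_facetsOf_absorberNonAlg hpos]
    exact (h.isFacetPacking_absorberNonAlg hpos).isKDecompositionOf
  exact ⟨halg, hnonAlg⟩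
end

section
/- Let k ≥ 2 and n ∈ ℕ. Let T, N, S ⊆ K_k^n be pairwise facet-disjoint partial designs such that T ∪ N ∪ S is a K_k-decomposition of K_{k−1}^n, and write S = {s_1,...,s_m}. Suppose that for each i ∈ [m] there are sets of edges A_i, A_i^{alg}, A_i^{non-alg} ⊆ K_k^n such that: (i) A_i^{alg} ⊆ T; (ii) K_{k−1}(s_i) ⊆ K_{k−1}(A_i); (iii) A_i^{alg} is a K_k-decomposition of K_{k−1}(A_i) \ K_{k−1}(s_i); (iv) A_i^{non-alg} is a K_k-decomposition of K_{k−1}(A_i); and (v) the sets K_{k−1}(A_1),...,K_{k−1}(A_m) are pairwise disjoint. Then N ∪ (T \ ∪_{i=1}^m A_i^{alg}) ∪ ∪_{i=1}^m A_i^{non-alg} is a K_k-decomposition of K_{k−1}^n. -/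
open Finset

/-- A partial design: a set of `k`-subsets, pairwise sharing at most `k-2` vertices. -/
def IsPartialDesign {V : Type*} [DecidableEq V] (k : ℕ) (P : Finset (Finset V)) : Prop :=
  (∀ e ∈ P, e.card = k) ∧
  ∀ e ∈ P, ∀ e' ∈ P, e ≠ e' → (e ∩ e').card < k - 1

/-- Two edge sets are facet-disjoint: no `(k-1)`-set lies in an edge of both. -/
def FacetDisjointSets {V : Type*} [DecidableEq V] (k : ℕ) (A B : Finset (Finset V)) : Prop :=
  ∀ f : Finset V, f.card = k - 1 → ¬((∃ e ∈ A, f ⊆ e) ∧ (∃ e ∈ B, f ⊆ e))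

/-!
For each `s ∈ S`, the sets `insert s (Aalg s)` and `Anonalg s` decompose the same facets. As these
facet sets are disjoint for different `s`, the unions `S ∪ ⋃ Aalg` and `⋃ Anonalg` also decompose
the same facets, so inside `T ∪ N ∪ S` the first may be traded for the second.
-/

theorem sized_biUnion {ι V : Type*} [DecidableEq V] {I : Finset ι} {G : ι → Finset (Finset V)}
    {r : ℕ} (hG : ∀ i ∈ I, (G i : Set (Finset V)).Sized r) :
    (I.biUnion G : Set (Finset V)).Sized r := by
  rw [coe_biUnion]
  exact Set.sized_iUnion₂.2 hG

theorem sized_facetsOf {V : Type*} [DecidableEq V] (k : ℕ) (H : Finset (Finset V)) :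
    (facetsOf k H : Set (Finset V)).Sized (k - 1) :=
  sized_biUnion fun e _ => Set.sized_powersetCard e (k - 1)

theorem FacetDisjointSets.disjoint {V : Type*} [DecidableEq V] {k : ℕ} {A B : Finset (Finset V)}
    (h : FacetDisjointSets k A B) (hA : ∀ e ∈ A, k - 1 ≤ e.card) : Disjoint A B := by
  refine disjoint_left.2 fun e heA heB => ?_
  obtain ⟨f, hfe, hf⟩ := exists_subset_card_eq (hA e heA)
  exact h f hf ⟨⟨e, heA, hfe⟩, e, heB, hfe⟩

theorem IsPartialDesign.disjoint {V : Type*} [DecidableEq V] {k : ℕ} {A B : Finset (Finset V)}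
    (hA : IsPartialDesign k A) (hAB : FacetDisjointSets k A B) : Disjoint A B :=
  hAB.disjoint fun e he => (Nat.sub_le k 1).trans (hA.1 e he).ge

namespace IsKDecompositionOf

variable {V : Type*} [DecidableEq V] {k : ℕ} {G H D R R' : Finset (Finset V)}

theorem mem_of_subset (hD : IsKDecompositionOf k G D) {e f : Finset V} (he : e ∈ D)
    (hfe : f ⊆ e) (hf : f.card = k - 1) : f ∈ G :=
  (hD.1 e he).2 f hfe hf

theorem subset_of_subset (hD : IsKDecompositionOf k G D) (hR : IsKDecompositionOf k H R)
    (hH : (H : Set (Finset V)).Sized (k - 1)) (hRD : R ⊆ D) : H ⊆ G := fun f hf =>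
  let ⟨_, ⟨he, hfe⟩, _⟩ := hR.2 f hf
  hD.mem_of_subset (hRD he) hfe (hH hf)

theorem empty : IsKDecompositionOf k (∅ : Finset (Finset V)) ∅ := by
  simp [IsKDecompositionOf]

theorem singleton {s : Finset V} (hs : s.card = k) :
    IsKDecompositionOf k (s.powersetCard (k - 1)) {s} := by
  refine ⟨fun e he => ?_, fun f hf => ?_⟩
  · obtain rfl := mem_singleton.1 he
    exact ⟨hs, fun f hfe hf => mem_powersetCard.2 ⟨hfe, hf⟩⟩
  · exact ⟨s, ⟨mem_singleton_self s, (mem_powersetCard.1 hf).1⟩, fun e he => mem_singleton.1 he.1⟩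

theorem existsUnique_mem_union_of_disjoint (hD : IsKDecompositionOf k G D)
    (hR : IsKDecompositionOf k H R) (hGH : Disjoint G H) {f : Finset V} (hfG : f ∈ G)
    (hf : f.card = k - 1) : ∃! e, e ∈ D ∪ R ∧ f ⊆ e := by
  obtain ⟨e, ⟨he, hfe⟩, huniq⟩ := hD.2 f hfG
  refine ⟨e, ⟨mem_union_left _ he, hfe⟩, fun e' ⟨he', hfe'⟩ => ?_⟩
  have he'R : e' ∉ R := fun h => disjoint_left.1 hGH hfG (hR.mem_of_subset h hfe' hf)
  exact huniq e' ⟨(mem_union.1 he').resolve_right he'R, hfe'⟩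

theorem union (hD : IsKDecompositionOf k G D) (hR : IsKDecompositionOf k H R)
    (hG : (G : Set (Finset V)).Sized (k - 1)) (hH : (H : Set (Finset V)).Sized (k - 1))
    (hGH : Disjoint G H) : IsKDecompositionOf k (G ∪ H) (D ∪ R) := by
  refine ⟨fun e he => ?_, fun f hf => ?_⟩
  · obtain he | he := mem_union.1 he
    · exact ⟨(hD.1 e he).1, fun f hfe hf => mem_union_left _ (hD.mem_of_subset he hfe hf)⟩
    · exact ⟨(hR.1 e he).1, fun f hfe hf => mem_union_right _ (hR.mem_of_subset he hfe hf)⟩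
  · obtain hfG | hfH := mem_union.1 hf
    · exact hD.existsUnique_mem_union_of_disjoint hR hGH hfG (hG hfG)
    · rw [union_comm]
      exact hR.existsUnique_mem_union_of_disjoint hD hGH.symm hfH (hH hfH)

theorem biUnion {ι : Type*} {I : Finset ι} {G D : ι → Finset (Finset V)}
    (hD : ∀ i ∈ I, IsKDecompositionOf k (G i) (D i))
    (hG : ∀ i ∈ I, (G i : Set (Finset V)).Sized (k - 1))
    (hdisj : (I : Set ι).PairwiseDisjoint G) :
    IsKDecompositionOf k (I.biUnion G) (I.biUnion D) := by
  classical
  induction I using Finset.induction_on with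
  | empty => exact empty
  | insert i I hi ih =>
    rw [forall_mem_insert] at hD hG
    rw [coe_insert, Set.pairwiseDisjoint_insert_of_notMem (mod_cast hi)] at hdisj
    rw [biUnion_insert, biUnion_insert]
    exact hD.1.union (ih hD.2 hG.2 hdisj.1) hG.1 (sized_biUnion hG.2)
      ((disjoint_biUnion_right _ _ _).2 hdisj.2)

theorem sdiff (hD : IsKDecompositionOf k G D) (hR : IsKDecompositionOf k H R)
    (hG : (G : Set (Finset V)).Sized (k - 1)) (hRD : R ⊆ D) :
    IsKDecompositionOf k (G \ H) (D \ R) := by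
  refine ⟨fun e he => ?_, fun f hf => ?_⟩
  · obtain ⟨heD, heR⟩ := mem_sdiff.1 he
    refine ⟨(hD.1 e heD).1, fun f hfe hf => ?_⟩
    have hfG : f ∈ G := hD.mem_of_subset heD hfe hf
    refine mem_sdiff.2 ⟨hfG, fun hfH => ?_⟩
    obtain ⟨r, ⟨hr, hfr⟩, -⟩ := hR.2 f hfH
    have hre : r = e := (hD.2 f hfG).unique ⟨hRD hr, hfr⟩ ⟨heD, hfe⟩
    exact heR (hre ▸ hr)
  · obtain ⟨hfG, hfH⟩ := mem_sdiff.1 hf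
    obtain ⟨e, ⟨he, hfe⟩, huniq⟩ := hD.2 f hfG
    have heR : e ∉ R := fun h => hfH (hR.mem_of_subset h hfe (hG hfG))
    exact ⟨e, ⟨mem_sdiff.2 ⟨he, heR⟩, hfe⟩, fun e' ⟨he', hfe'⟩ =>
      huniq e' ⟨(mem_sdiff.1 he').1, hfe'⟩⟩

theorem trade (hD : IsKDecompositionOf k G D) (hR : IsKDecompositionOf k H R)
    (hR' : IsKDecompositionOf k H R') (hG : (G : Set (Finset V)).Sized (k - 1))
    (hH : (H : Set (Finset V)).Sized (k - 1)) (hRD : R ⊆ D) :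
    IsKDecompositionOf k G (D \ R ∪ R') := by
  have hGH : IsKDecompositionOf k (G \ H ∪ H) (D \ R ∪ R') :=
    (hD.sdiff hR hG hRD).union hR' (hG.mono (mod_cast sdiff_subset)) hH sdiff_disjoint
  rwa [sdiff_union_of_subset (hD.subset_of_subset hR hH hRD)] at hGH

theorem insert_of_sdiff_powersetCard {s : Finset V}
    (hD : IsKDecompositionOf k (G \ s.powersetCard (k - 1)) D)
    (hG : (G : Set (Finset V)).Sized (k - 1)) (hs : s.card = k)
    (hsG : s.powersetCard (k - 1) ⊆ G) : IsKDecompositionOf k G (insert s D) := by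
  have hunion := (singleton hs).union hD (Set.sized_powersetCard s (k - 1))
    (hG.mono (mod_cast sdiff_subset)) disjoint_sdiff
  rwa [union_sdiff_of_subset hsG, ← insert_eq] at hunion

end IsKDecompositionOf

theorem stmt_17_general {V : Type*} [DecidableEq V] {k : ℕ} {G T N S : Finset (Finset V)}
    (hG : (G : Set (Finset V)).Sized (k - 1))
    (hTN : Disjoint T N) (hTS : Disjoint T S) (hNS : Disjoint N S)
    (hdec : IsKDecompositionOf k G (T ∪ N ∪ S))
    {F Aalg Anonalg : Finset V → Finset (Finset V)}
    (hF : ∀ s ∈ S, (F s : Set (Finset V)).Sized (k - 1))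
    (halgT : ∀ s ∈ S, Aalg s ⊆ T)
    (hcover : ∀ s ∈ S, s.powersetCard (k - 1) ⊆ F s)
    (halg : ∀ s ∈ S, IsKDecompositionOf k (F s \ s.powersetCard (k - 1)) (Aalg s))
    (hnonalg : ∀ s ∈ S, IsKDecompositionOf k (F s) (Anonalg s))
    (hdisj : (S : Set (Finset V)).PairwiseDisjoint F) :
    IsKDecompositionOf k G (N ∪ (T \ S.biUnion Aalg) ∪ S.biUnion Anonalg) := by
  have hcard : ∀ s ∈ S, s.card = k := fun s hs => (hdec.1 s (mem_union_right _ hs)).1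
  have hold : IsKDecompositionOf k (S.biUnion F) (S.biUnion fun s => insert s (Aalg s)) :=
    .biUnion (fun s hs =>
      (halg s hs).insert_of_sdiff_powersetCard (hF s hs) (hcard s hs) (hcover s hs)) hF hdisj
  have hnew : IsKDecompositionOf k (S.biUnion F) (S.biUnion Anonalg) := .biUnion hnonalg hF hdisj
  have hinsert : (S.biUnion fun s => insert s (Aalg s)) = S ∪ S.biUnion Aalg := by
    grind
  have halgS : S.biUnion Aalg ⊆ T := biUnion_subset.2 halgT
  have hrest : (T ∪ N ∪ S) \ (S ∪ S.biUnion Aalg) = N ∪ (T \ S.biUnion Aalg) := by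
    grind [disjoint_left]
  rw [hinsert] at hold
  rw [← hrest]
  exact hdec.trade hold hnew hG (sized_biUnion hF) (by grind)

/-- replacing the edges `s ∈ S` of a decomposition `T ∪ N ∪ S` of
`K_{k-1}^n` by absorbers: if for each `s ∈ S` the sets `A s`, `Aalg s ⊆ T`,
`Anonalg s` satisfy the absorption properties (iii)-(iv), the facet sets of the
`A s` being pairwise disjoint, then
`N ∪ (T \ ∪ Aalg) ∪ ∪ Anonalg` is again a decomposition of `K_{k-1}^n`. -/
theorem stmt_17 (k n : ℕ) (hk : 2 ≤ k)
    (T N S : Finset (Finset (Fin n)))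
    (hT : IsPartialDesign k T) (hN : IsPartialDesign k N) (hS : IsPartialDesign k S)
    (hTN : FacetDisjointSets k T N) (hTS : FacetDisjointSets k T S)
    (hNS : FacetDisjointSets k N S)
    (hdec : IsKDecompositionOf k (Finset.univ.powersetCard (k - 1)) (T ∪ N ∪ S))
    (A Aalg Anonalg : Finset (Fin n) → Finset (Finset (Fin n)))
    (hedges : ∀ s ∈ S, ∀ e ∈ A s, e.card = k)
    (halgT : ∀ s ∈ S, Aalg s ⊆ T)
    (hcover : ∀ s ∈ S, s.powersetCard (k - 1) ⊆ facetsOf k (A s))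
    (halg : ∀ s ∈ S, IsKDecompositionOf k
      (facetsOf k (A s) \ s.powersetCard (k - 1)) (Aalg s))
    (hnonalg : ∀ s ∈ S, IsKDecompositionOf k (facetsOf k (A s)) (Anonalg s))
    (hdisj : ∀ s ∈ S, ∀ s' ∈ S, s ≠ s' →
      Disjoint (facetsOf k (A s)) (facetsOf k (A s'))) :
    IsKDecompositionOf k (Finset.univ.powersetCard (k - 1))
      (N ∪ (T \ S.biUnion Aalg) ∪ S.biUnion Anonalg) := by
  exact stmt_17_general (mod_cast Set.sized_powersetCard univ (k - 1)) (hT.disjoint hTN)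
    (hT.disjoint hTS) (hN.disjoint hNS) hdec (fun s _ => sized_facetsOf k (A s)) halgT hcover
    halg hnonalg hdisj
end
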